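/- arXiv:2204.13876 — 2 statements merged into one kernel-verified Lean document; each statement's English description precedes it below -/
import Mathlib

section
/- Let G be a simple graph on a finite vertex set V partitioned as V = V₁ ⊔ V₂ with |V₁| = n₁ ≥ 1 and |V₂| = n₂ ≥ 1, and suppose the unique edge of G joining V₁ to V₂ is a single bridge edge {v₁, v₂} with v₁ ∈ V₁ and v₂ ∈ V₂ (all other edges of G lie within V₁ or within V₂). Then β_G(x) = (1+x)^{n₂}·β_{G[V₁]}(x) + (1+x)^{n₁}·β_{G[V₂]}(x) − x·(1+x)^{n₁+n₂−2} as polynomials with integer coefficients. -/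
open Polynomial

/-- `islandF G S` is the quantity `f_G(S) = 2·c_G(S) + e_G(S) − |S|`, where `c_G(S)`
and `e_G(S)` are the numbers of connected components and edges of the induced
subgraph `G[S]`.  For a planar graph it equals the total number of faces of a
planar embedding of `G[S]`, summed over connected components. -/
noncomputable def islandF {V : Type*} [Fintype V] [DecidableEq V]
    (G : SimpleGraph V) (S : Finset V) : ℤ :=
  2 * Nat.card ((G.induce (S : Set V)).ConnectedComponent)
    + Nat.card ((G.induce (S : Set V)).edgeSet) - S.card

/-- The total island boundary polynomial `β_G(x) = Σ_{∅ ≠ S ⊆ V} f_G(S)·x^{|S|−1}`. -/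
noncomputable def islandPoly {V : Type*} [Fintype V] [DecidableEq V]
    (G : SimpleGraph V) : Polynomial ℤ :=
  ∑ S ∈ Finset.univ.powerset.filter (fun S : Finset V => S.Nonempty),
    Polynomial.C (islandF G S) * Polynomial.X ^ (S.card - 1)

/-!
The weight `f` is additive over vertex-disjoint graphs with no edges between them, and adding an
edge between two different components lowers it by one: `2·c` drops by two and `e` grows by one.
Hence `f_G(S ⊔ T) = f_G(S) + f_G(T) - [v₁ ∈ S]·[v₂ ∈ T]` for `S ⊆ V₁` and `T ⊆ V₂`. Since
`f_G(∅) = 0`, the polynomial `x·β_G(x)` is the full generating function `Σ_S f_G(S)·x^|S|`, and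
generating functions over subsets of a disjoint union multiply, so each of the three terms of
`f_G(S ⊔ T)` contributes a product.
-/

open SimpleGraph

section ConnectedComponents

variable {α β : Type*} {H : SimpleGraph α} {u v : α}

theorem reachable_sup_edge_iff {a b : α} :
    (H ⊔ edge u v).Reachable a b ↔
      H.Reachable a b ∨ (H.Reachable a u ∧ H.Reachable v b) ∨
        (H.Reachable a v ∧ H.Reachable u b) := by
  have huv : (H ⊔ edge u v).Reachable u v := by
    obtain rfl | hne := eq_or_ne u v
    · rfl
    · exact Adj.reachable (by simp [edge_adj, hne])
  constructor
  · rintro ⟨p⟩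
    induction p with
    | nil => exact .inl .rfl
    | @cons a b c hab _ ih =>
      obtain hab | hab := hab
      · have := hab.reachable
        exact ih.imp this.trans (Or.imp (And.imp_left this.trans) (And.imp_left this.trans))
      · obtain ⟨⟨rfl, rfl⟩ | ⟨rfl, rfl⟩, -⟩ := (edge_adj ..).mp hab
        · obtain h | ⟨-, h⟩ | ⟨-, h⟩ := ih
          exacts [.inr (.inl ⟨.rfl, h⟩), .inr (.inl ⟨.rfl, h⟩), .inl h]
        · obtain h | ⟨-, h⟩ | ⟨-, h⟩ := ih
          exacts [.inr (.inr ⟨.rfl, h⟩), .inl h, .inr (.inr ⟨.rfl, h⟩)]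
  · have mono {x y : α} (h : H.Reachable x y) : (H ⊔ edge u v).Reachable x y :=
      h.mono le_sup_left
    rintro (h | ⟨hau, hvb⟩ | ⟨hav, hub⟩)
    · exact mono h
    · exact (mono hau).trans (huv.trans (mono hvb))
    · exact (mono hav).trans (huv.symm.trans (mono hub))

theorem bijective_map_ofLE_sup_edge (h : ¬H.Reachable u v) :
    Function.Bijective fun c : {c : H.ConnectedComponent // c ≠ H.connectedComponentMk v} ↦
      c.1.map (Hom.ofLE (le_sup_left : H ≤ H ⊔ edge u v)) := by
  constructor
  · rintro ⟨c, hc⟩ ⟨d, hd⟩ hcd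
    induction c, d using ConnectedComponent.ind₂ with | _ a b
    obtain hab | ⟨-, hvb⟩ | ⟨hav, -⟩ := reachable_sup_edge_iff.mp (ConnectedComponent.exact hcd)
    · exact Subtype.ext (ConnectedComponent.sound hab)
    · exact absurd (ConnectedComponent.sound hvb.symm) hd
    · exact absurd (ConnectedComponent.sound hav) hc
  · intro c
    induction c using ConnectedComponent.ind with | _ a
    by_cases hav : H.Reachable a v
    · exact ⟨⟨H.connectedComponentMk u, mt ConnectedComponent.exact h⟩,
        ConnectedComponent.sound (reachable_sup_edge_iff.mpr (.inr (.inl ⟨.rfl, hav.symm⟩)))⟩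
    · exact ⟨⟨H.connectedComponentMk a, mt ConnectedComponent.exact hav⟩, rfl⟩

theorem card_connectedComponent_sup_edge_add_one [Finite H.ConnectedComponent]
    (h : ¬H.Reachable u v) :
    Nat.card (H ⊔ edge u v).ConnectedComponent + 1 = Nat.card H.ConnectedComponent := by
  classical
  rw [← Nat.card_eq_of_bijective _ (bijective_map_ofLE_sup_edge h), ← Finite.card_option]
  exact Nat.card_congr (Equiv.optionSubtypeNe _)

/-- The components of a disjoint union of graphs are the components of the two summands. -/
def connectedComponentSumEquiv (A : SimpleGraph α) (B : SimpleGraph β) :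
    (A ⊕g B).ConnectedComponent ≃ A.ConnectedComponent ⊕ B.ConnectedComponent where
  toFun := ConnectedComponent.lift (Sum.map A.connectedComponentMk B.connectedComponentMk) <| by
    intro x y p hp
    clear hp
    induction p with
    | nil => rfl
    | @cons x y _ hadj _ ih =>
      refine Eq.trans ?_ ih
      match x, y, hadj with
      | .inl _, .inl _, hadj =>
        exact congrArg Sum.inl (ConnectedComponent.connectedComponentMk_eq_of_adj hadj)
      | .inr _, .inr _, hadj =>
        exact congrArg Sum.inr (ConnectedComponent.connectedComponentMk_eq_of_adj hadj)
  invFun := Sum.elim (ConnectedComponent.map Embedding.sumInl.toHom)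
    (ConnectedComponent.map Embedding.sumInr.toHom)
  left_inv c := by
    induction c using ConnectedComponent.ind with | _ x
    cases x <;> rfl
  right_inv c := by
    obtain c | c := c <;> induction c using ConnectedComponent.ind <;> rfl

end ConnectedComponents

section FaceCount

variable {α β : Type*}

/-- The Euler face count `2·c(H) + e(H) - |V(H)|` of a whole graph, so that
`f_G(S) = faceCount (G.induce S)`. For infinite graphs the `Nat.card` terms may be junk zeros. -/
noncomputable def faceCount (H : SimpleGraph α) : ℤ :=
  2 * Nat.card H.ConnectedComponent + Nat.card H.edgeSet - Nat.card α

theorem faceCount_congr {H : SimpleGraph α} {K : SimpleGraph β} (e : H ≃g K) :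
    faceCount H = faceCount K := by
  rw [faceCount, faceCount, Nat.card_congr e.connectedComponentEquiv,
    Nat.card_congr e.mapEdgeSet, Nat.card_congr e.toEquiv]

theorem faceCount_of_isEmpty [IsEmpty α] (H : SimpleGraph α) : faceCount H = 0 := by
  have : IsEmpty H.ConnectedComponent := Quot.instIsEmpty
  have : IsEmpty H.edgeSet := by simp [Subsingleton.elim H ⊥]
  simp [faceCount]

theorem faceCount_sum [Finite α] [Finite β] (A : SimpleGraph α) (B : SimpleGraph β) :
    faceCount (A ⊕g B) = faceCount A + faceCount B := by
  simp only [faceCount, Nat.card_congr (connectedComponentSumEquiv A B),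
    Nat.card_congr (edgeSetSumEquiv (G := A) (H := B)), Nat.card_sum]
  push_cast
  ring

theorem faceCount_sup_edge [Finite α] {H : SimpleGraph α} {u v : α} (h : ¬H.Reachable u v) :
    faceCount (H ⊔ edge u v) = faceCount H - 1 := by
  have hne : u ≠ v := fun huv ↦ h (huv ▸ .rfl)
  have hcomponents := card_connectedComponent_sup_edge_add_one h
  have hedges : Nat.card (H ⊔ edge u v).edgeSet = Nat.card H.edgeSet + 1 := by
    rw [edgeSet_sup, edgeSet_edge_of_ne hne, Set.union_singleton]
    exact Set.ncard_insert_of_notMem (mt Adj.reachable h)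
  simp only [faceCount, hedges, ← hcomponents]
  push_cast
  ring

end FaceCount

section InducedUnion

variable {V : Type*} {G : SimpleGraph V} {s t : Set V}

/-- An induced subgraph on a disjoint union `s ∪ t`, transported to the vertex type `s ⊕ t`. -/
noncomputable def comapSumElimIso (G : SimpleGraph V) (hst : Disjoint s t) :
    G.comap (Sum.elim Subtype.val Subtype.val : s ⊕ t → V) ≃g G.induce (s ∪ t) := by
  classical
  exact
  { toEquiv := (Equiv.Set.union hst).symm
    map_rel_iff' := by rintro (_ | _) (_ | _) <;> rfl }

theorem comap_sumElim_of_forall_not_adj (h : ∀ a ∈ s, ∀ b ∈ t, ¬G.Adj a b) :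
    G.comap (Sum.elim Subtype.val Subtype.val : s ⊕ t → V) = G.induce s ⊕g G.induce t := by
  ext (⟨a, ha⟩ | ⟨a, ha⟩) (⟨b, hb⟩ | ⟨b, hb⟩)
  · simp
  · simpa using h a ha b hb
  · simpa [G.adj_comm] using h b hb a ha
  · simp

theorem comap_sumElim_of_forall_adj_iff {u v : V} (hu : u ∈ s) (hv : v ∈ t)
    (h : ∀ a ∈ s, ∀ b ∈ t, G.Adj a b ↔ a = u ∧ b = v) :
    G.comap (Sum.elim Subtype.val Subtype.val : s ⊕ t → V) =
      (G.induce s ⊕g G.induce t) ⊔ edge (.inl ⟨u, hu⟩) (.inr ⟨v, hv⟩) := by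
  ext (⟨a, ha⟩ | ⟨a, ha⟩) (⟨b, hb⟩ | ⟨b, hb⟩)
  · simp [edge_adj]
  · simpa [edge_adj] using h a ha b hb
  · simpa [edge_adj, G.adj_comm, and_comm] using h b hb a ha
  · simp [edge_adj]

end InducedUnion

section IslandF

variable {V W : Type*} [Fintype V] [DecidableEq V] [Fintype W] [DecidableEq W]

theorem islandF_eq_faceCount (G : SimpleGraph V) (S : Finset V) :
    islandF G S = faceCount (G.induce (S : Set V)) := by
  simp [islandF, faceCount]

theorem islandF_empty (G : SimpleGraph V) : islandF G ∅ = 0 := by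
  have : IsEmpty ((∅ : Finset V) : Set V) := by simp
  rw [islandF_eq_faceCount, faceCount_of_isEmpty]

theorem islandF_map {H : SimpleGraph W} {G : SimpleGraph V} (f : H ↪g G) (S : Finset W) :
    islandF G (S.map f.toEmbedding) = islandF H S := by
  rw [islandF_eq_faceCount, islandF_eq_faceCount, Finset.coe_map]
  exact (faceCount_congr
    { toEquiv := Equiv.Set.image f _ f.injective
      map_rel_iff' := f.map_rel_iff }).symm

theorem islandF_union_eq_faceCount_comap (G : SimpleGraph V) {S T : Finset V}
    (hST : Disjoint S T) :
    islandF G (S ∪ T) =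
      faceCount (G.comap (Sum.elim Subtype.val Subtype.val : (S : Set V) ⊕ (T : Set V) → V)) := by
  rw [islandF_eq_faceCount, Finset.coe_union]
  exact (faceCount_congr (comapSumElimIso G (Finset.disjoint_coe.mpr hST))).symm

theorem islandF_union_of_forall_adj_imp {G : SimpleGraph V} {S T : Finset V} {u v : V}
    (hST : Disjoint S T) (huv : G.Adj u v)
    (h : ∀ a ∈ S, ∀ b ∈ T, G.Adj a b → a = u ∧ b = v) :
    islandF G (S ∪ T) =
      islandF G S + islandF G T - if u ∈ S ∧ v ∈ T then 1 else 0 := by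
  simp only [islandF_union_eq_faceCount_comap G hST, islandF_eq_faceCount G]
  split_ifs with hmem
  · have hadj_iff : ∀ a ∈ (S : Set V), ∀ b ∈ (T : Set V), G.Adj a b ↔ a = u ∧ b = v :=
      fun a ha b hb ↦ ⟨h a ha b hb, by rintro ⟨rfl, rfl⟩; exact huv⟩
    rw [comap_sumElim_of_forall_adj_iff hmem.1 hmem.2 hadj_iff,
      faceCount_sup_edge (not_reachable_sum_inl_inr _ _), faceCount_sum]
  · have hnot_adj : ∀ a ∈ (S : Set V), ∀ b ∈ (T : Set V), ¬G.Adj a b := by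
      intro a ha b hb hab
      obtain ⟨rfl, rfl⟩ := h a ha b hb hab
      exact hmem ⟨ha, hb⟩
    rw [comap_sumElim_of_forall_not_adj hnot_adj, faceCount_sum, sub_zero]

end IslandF

section SubsetGenFun

variable {α β R : Type*} [Semiring R]

/-- The generating function `Σ_{S ⊆ U} f(S)·x^|S|` of a set function `f` over the subsets of `U`. -/
noncomputable def subsetGenFun (U : Finset α) (f : Finset α → R) : R[X] :=
  ∑ S ∈ U.powerset, monomial S.card (f S)

theorem subsetGenFun_congr {U : Finset α} {f g : Finset α → R} (h : ∀ S ⊆ U, f S = g S) :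
    subsetGenFun U f = subsetGenFun U g :=
  Finset.sum_congr rfl fun S hS ↦ by rw [h S (Finset.mem_powerset.mp hS)]

theorem subsetGenFun_add (U : Finset α) (f g : Finset α → R) :
    subsetGenFun U (fun S ↦ f S + g S) = subsetGenFun U f + subsetGenFun U g := by
  simp [subsetGenFun, Finset.sum_add_distrib]

theorem subsetGenFun_sub {R : Type*} [Ring R] (U : Finset α) (f g : Finset α → R) :
    subsetGenFun U (fun S ↦ f S - g S) = subsetGenFun U f - subsetGenFun U g := by
  simp [subsetGenFun, Finset.sum_sub_distrib]

theorem subsetGenFun_map (e : α ↪ β) (U : Finset α) (f : Finset β → R) :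
    subsetGenFun (U.map e) f = subsetGenFun U fun S ↦ f (S.map e) := by
  classical
  simp only [subsetGenFun, Finset.map_eq_image, Finset.powerset_image]
  rw [Finset.sum_image (Finset.image_injective e.injective).injOn]
  simp [Finset.card_image_of_injective _ e.injective]

theorem subsetGenFun_one {R : Type*} [CommSemiring R] (U : Finset α) :
    subsetGenFun U (fun _ ↦ (1 : R)) = (1 + X) ^ U.card := by
  simp [subsetGenFun, add_comm (1 : R[X]), ← Finset.sum_pow_mul_eq_add_pow, ← X_pow_eq_monomial]

theorem subsetGenFun_union [DecidableEq α] {U W : Finset α} (hUW : Disjoint U W)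
    (f g : Finset α → R) :
    subsetGenFun (U ∪ W) (fun S ↦ f (S ∩ U) * g (S ∩ W)) =
      subsetGenFun U f * subsetGenFun W g := by
  simp only [subsetGenFun]
  rw [Finset.sum_mul_sum, ← Finset.sum_product']
  refine Finset.sum_nbij' (fun S ↦ (S ∩ U, S ∩ W)) (fun p ↦ p.1 ∪ p.2) ?_ ?_ ?_ ?_ ?_
  · simp
  · simp only [Finset.mem_product, Finset.mem_powerset]
    exact fun p hp ↦ Finset.union_subset_union hp.1 hp.2
  · intro S hS
    rw [← Finset.inter_union_distrib_left,
      Finset.inter_eq_left.mpr (Finset.mem_powerset.mp hS)]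
  · rintro ⟨A, B⟩ hAB
    have := Finset.disjoint_left.mp hUW
    simp only [Finset.mem_product, Finset.mem_powerset] at hAB
    ext <;> grind
  · intro S hS
    have hcard : S.card = (S ∩ U).card + (S ∩ W).card := by
      rw [← Finset.card_union_of_disjoint
          (hUW.mono Finset.inter_subset_right Finset.inter_subset_right),
        ← Finset.inter_union_distrib_left, Finset.inter_eq_left.mpr (Finset.mem_powerset.mp hS)]
    rw [monomial_mul_monomial, hcard]

theorem subsetGenFun_ite_mem {R : Type*} [CommSemiring R] [DecidableEq α] {U : Finset α} {v : α}
    (hv : v ∈ U) :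
    subsetGenFun U (fun S ↦ if v ∈ S then (1 : R) else 0) = X * (1 + X) ^ (U.card - 1) := by
  have hsplit : U = {v} ∪ U.erase v := by rw [← Finset.insert_eq, Finset.insert_erase hv]
  have hdisj : Disjoint {v} (U.erase v) := by simp
  have hsingleton : subsetGenFun {v} (fun S ↦ if v ∈ S then (1 : R) else 0) = X := by
    rw [subsetGenFun, ← insert_empty_eq v, Finset.sum_powerset_insert (by simp)]
    simp [← monomial_one_one_eq_X]
  calc subsetGenFun U (fun S ↦ if v ∈ S then (1 : R) else 0)
      = subsetGenFun ({v} ∪ U.erase v) (fun S ↦ (if v ∈ S ∩ {v} then 1 else 0) * 1) := by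
        simp [← hsplit]
    _ = X * (1 + X) ^ (U.card - 1) := by
        rw [subsetGenFun_union hdisj (fun S ↦ if v ∈ S then 1 else 0) fun _ ↦ 1, hsingleton,
          subsetGenFun_one, Finset.card_erase_of_mem hv]

end SubsetGenFun

section IslandPoly

variable {V W : Type*} [Fintype V] [DecidableEq V] [Fintype W] [DecidableEq W]

theorem X_mul_islandPoly (G : SimpleGraph V) :
    X * islandPoly G = subsetGenFun Finset.univ (islandF G) := by
  rw [islandPoly, subsetGenFun, Finset.sum_filter, Finset.mul_sum]
  refine Finset.sum_congr rfl fun S _ ↦ ?_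
  split_ifs with hS
  · rw [C_mul_X_pow_eq_monomial, X_mul_monomial, Nat.sub_add_cancel hS.card_pos]
  · simp [Finset.not_nonempty_iff_eq_empty.mp hS, islandF_empty]

theorem X_mul_islandPoly_of_embedding {H : SimpleGraph W} {G : SimpleGraph V} (f : H ↪g G) :
    X * islandPoly H = subsetGenFun (Finset.univ.map f.toEmbedding) (islandF G) := by
  simp only [X_mul_islandPoly, subsetGenFun_map, islandF_map]

theorem X_mul_islandPoly_induce (G : SimpleGraph V) (U : Finset V) :
    X * islandPoly (G.induce (U : Set V)) = subsetGenFun U (islandF G) := by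
  rw [X_mul_islandPoly_of_embedding (Embedding.induce (G := G) (U : Set V))]
  congr 1
  ext a
  simp

theorem subsetGenFun_islandF_union {G : SimpleGraph V} {V₁ V₂ : Finset V} {v₁ v₂ : V}
    (hdisj : Disjoint V₁ V₂) (hv₁ : v₁ ∈ V₁) (hv₂ : v₂ ∈ V₂) (hadj : G.Adj v₁ v₂)
    (hunique : ∀ a ∈ V₁, ∀ b ∈ V₂, G.Adj a b → a = v₁ ∧ b = v₂) :
    subsetGenFun (V₁ ∪ V₂) (islandF G) =
      subsetGenFun V₁ (islandF G) * (1 + X) ^ V₂.card +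
        (1 + X) ^ V₁.card * subsetGenFun V₂ (islandF G) -
        X * (1 + X) ^ (V₁.card - 1) * (X * (1 + X) ^ (V₂.card - 1)) := by
  have hsplit : ∀ S ⊆ V₁ ∪ V₂, islandF G S =
      islandF G (S ∩ V₁) * 1 + 1 * islandF G (S ∩ V₂) -
        (if v₁ ∈ S ∩ V₁ then 1 else 0) * (if v₂ ∈ S ∩ V₂ then 1 else 0) := by
    intro S hS
    have hdisjS : Disjoint (S ∩ V₁) (S ∩ V₂) :=
      hdisj.mono Finset.inter_subset_right Finset.inter_subset_right
    have huniqueS : ∀ a ∈ S ∩ V₁, ∀ b ∈ S ∩ V₂, G.Adj a b → a = v₁ ∧ b = v₂ :=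
      fun a ha b hb ↦ hunique a (Finset.mem_inter.mp ha).2 b (Finset.mem_inter.mp hb).2
    rw [mul_one, one_mul, ite_zero_mul_ite_zero, mul_one,
      ← islandF_union_of_forall_adj_imp hdisjS hadj huniqueS,
      ← Finset.inter_union_distrib_left, Finset.inter_eq_left.mpr hS]
  rw [subsetGenFun_congr hsplit, subsetGenFun_sub, subsetGenFun_add,
    subsetGenFun_union hdisj (islandF G) fun _ ↦ 1,
    subsetGenFun_union hdisj (fun _ ↦ 1) (islandF G),
    subsetGenFun_union hdisj (fun S ↦ if v₁ ∈ S then 1 else 0) fun S ↦ if v₂ ∈ S then 1 else 0,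
    subsetGenFun_one, subsetGenFun_one, subsetGenFun_ite_mem hv₁, subsetGenFun_ite_mem hv₂]

end IslandPoly

theorem islandPoly_bridge {V : Type*} [Fintype V] [DecidableEq V]
    (G : SimpleGraph V) (V₁ V₂ : Finset V)
    (hdisj : Disjoint V₁ V₂) (hcover : V₁ ∪ V₂ = Finset.univ)
    (h₁ : 1 ≤ V₁.card) (h₂ : 1 ≤ V₂.card)
    (v₁ v₂ : V) (hv₁ : v₁ ∈ V₁) (hv₂ : v₂ ∈ V₂)
    (hbridge : G.Adj v₁ v₂)
    (hunique : ∀ a b : V, G.Adj a b → a ∈ V₁ → b ∈ V₂ → a = v₁ ∧ b = v₂) :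
    islandPoly G
      = (1 + Polynomial.X) ^ V₂.card * islandPoly (G.induce (V₁ : Set V))
        + (1 + Polynomial.X) ^ V₁.card * islandPoly (G.induce (V₂ : Set V))
        - Polynomial.X * (1 + Polynomial.X) ^ (V₁.card + V₂.card - 2) := by
  have hexponent : V₁.card + V₂.card - 2 = (V₁.card - 1) + (V₂.card - 1) := by omega
  apply mul_left_cancel₀ (X_ne_zero (R := ℤ))
  calc X * islandPoly G
      = subsetGenFun (V₁ ∪ V₂) (islandF G) := by rw [X_mul_islandPoly, hcover]
    _ = subsetGenFun V₁ (islandF G) * (1 + X) ^ V₂.card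
        + (1 + X) ^ V₁.card * subsetGenFun V₂ (islandF G)
        - X * (1 + X) ^ (V₁.card - 1) * (X * (1 + X) ^ (V₂.card - 1)) :=
      subsetGenFun_islandF_union hdisj hv₁ hv₂ hbridge fun a ha b hb hab ↦ hunique a b hab ha hb
    _ = _ := by
      rw [← X_mul_islandPoly_induce, ← X_mul_islandPoly_induce, hexponent, pow_add]
      ring
end

section
/- Let G be a connected simple graph on a finite vertex set with n ≥ 3 vertices, and suppose there exist integers a and b such that β_G(x) = a·(1+x)^{n−1} + b·(1+x)^{n−2} as polynomials with integer coefficients. Then a = 1, b = n−1, and G is a tree (connected and acyclic). -/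
open Polynomial

/-!
A finite graph with `n` vertices, `e` edges and `c` components satisfies `n ≤ e + c`, with equality
exactly for forests. Every graph on at most two vertices is a forest, so `f(S) = |S| - e(S)` when
`|S| ≤ 2`; hence the coefficients of `1` and `x` in `β` are `n` and `n (n - 1) - e`, while the top
coefficient is `f(V) = 2 c + e - n`. Comparing them with the coefficients of
`a (1 + x)^(n - 1) + b (1 + x)^(n - 2)` gives first `a = n - e` and then `a = 2 c + e - n`.
Together these force `e + c = n`, i.e. `G` is a forest.
-/

section Counting

variable {V : Type*} (G : SimpleGraph V)

open Finset in
theorem card_edgeSet_induce [Fintype V] [DecidableEq V] [DecidableRel G.Adj] (S : Finset V) :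
    Nat.card (G.induce (S : Set V)).edgeSet = #{e ∈ G.edgeFinset | e.toFinset ⊆ S} := by
  rw [SimpleGraph.card_filter_edgeFinset_toFinset_subset, Nat.card_eq_fintype_card,
    SimpleGraph.edgeFinset_card]

open Finset in
theorem sum_card_edgeSet_induce [Finite V] [DecidableEq V] {ι : Type*} (t : Finset ι)
    (S : ι → Finset V) {k : ℕ} (hk : ∀ e ∈ G.edgeSet, #{i ∈ t | e.toFinset ⊆ S i} = k) :
    ∑ i ∈ t, Nat.card (G.induce (S i : Set V)).edgeSet = Nat.card G.edgeSet * k := by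
  have : DecidableRel G.Adj := Classical.decRel _
  cases nonempty_fintype V
  calc ∑ i ∈ t, Nat.card (G.induce (S i : Set V)).edgeSet
      = ∑ i ∈ t, #{e ∈ G.edgeFinset | e.toFinset ⊆ S i} :=
        sum_congr rfl fun i _ ↦ card_edgeSet_induce G (S i)
    _ = ∑ e ∈ G.edgeFinset, #{i ∈ t | e.toFinset ⊆ S i} :=
        sum_card_bipartiteAbove_eq_sum_card_bipartiteBelow _
    _ = #G.edgeFinset * k := sum_const_nat fun e he ↦ hk e (SimpleGraph.mem_edgeFinset.1 he)
    _ = Nat.card G.edgeSet * k := by rw [Nat.card_eq_fintype_card, SimpleGraph.edgeFinset_card]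

theorem sum_powersetCard_card_edgeSet_induce [Fintype V] {k : ℕ} (hk : 2 ≤ k) :
    ∑ S ∈ Finset.powersetCard k (Finset.univ : Finset V),
        Nat.card (G.induce (S : Set V)).edgeSet
      = Nat.card G.edgeSet * (Fintype.card V - 2).choose (k - 2) := by
  classical
  refine sum_card_edgeSet_induce G _ _ fun e he ↦ ?_
  have card_toFinset : e.toFinset.card = 2 :=
    Sym2.card_toFinset_of_not_isDiag e (G.not_isDiag_of_mem_edgeSet he)
  rw [Finset.card_filter_powersetCard_subset _ _ _ (Finset.subset_univ _) (card_toFinset ▸ hk),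
    card_toFinset, Finset.card_univ]

theorem sum_card_edgeSet_toSimpleGraph [Finite V] [Fintype G.ConnectedComponent] :
    ∑ c : G.ConnectedComponent, Nat.card c.toSimpleGraph.edgeSet = Nat.card G.edgeSet := by
  classical
  cases nonempty_fintype V
  have card_edgeSet_eq_induce (c : G.ConnectedComponent) : Nat.card c.toSimpleGraph.edgeSet =
      Nat.card (G.induce (c.supp.toFinset : Set V)).edgeSet := by
    rw [Set.coe_toFinset]
    rfl
  rw [Fintype.sum_congr _ _ card_edgeSet_eq_induce, ← mul_one (Nat.card G.edgeSet)]
  refine sum_card_edgeSet_induce G _ _ (Sym2.ind fun u v huv ↦ ?_)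
  have same_component : G.connectedComponentMk u = G.connectedComponentMk v :=
    SimpleGraph.ConnectedComponent.sound (SimpleGraph.Adj.reachable huv)
  refine Finset.card_eq_one.2 ⟨G.connectedComponentMk u, ?_⟩
  ext c
  simp [Sym2.toFinset_mk_eq, Set.insert_subset_iff, ← same_component, eq_comm]

theorem sum_card_connectedComponent [Finite V] [Fintype G.ConnectedComponent] :
    ∑ c : G.ConnectedComponent, Nat.card c = Nat.card V := by
  rw [← Nat.card_sigma]
  exact Nat.card_congr (Equiv.sigmaFiberEquiv G.connectedComponentMk)

theorem isAcyclic_iff_forall_isTree_toSimpleGraph :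
    G.IsAcyclic ↔ ∀ c : G.ConnectedComponent, c.toSimpleGraph.IsTree := by
  classical
  refine ⟨SimpleGraph.IsAcyclic.isTree_connectedComponent, fun h v p hp ↦ ?_⟩
  have support_subset : ∀ w ∈ p.support, w ∈ (G.connectedComponentMk v).supp := fun w hw ↦
    SimpleGraph.ConnectedComponent.sound (p.takeUntil w hw).reachable.symm
  apply (h (G.connectedComponentMk v)).isAcyclic (p.induce _ support_subset)
  apply SimpleGraph.Walk.IsCycle.of_map (f := (SimpleGraph.Embedding.induce _).toHom)
  rwa [SimpleGraph.Walk.map_induce]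

theorem isAcyclic_iff_card_edgeSet_add_card_connectedComponent [Finite V] :
    G.IsAcyclic ↔ Nat.card G.edgeSet + Nat.card G.ConnectedComponent = Nat.card V := by
  cases nonempty_fintype G.ConnectedComponent
  calc G.IsAcyclic
      ↔ ∀ c : G.ConnectedComponent, c.toSimpleGraph.IsTree :=
        isAcyclic_iff_forall_isTree_toSimpleGraph G
    _ ↔ ∀ c : G.ConnectedComponent, Nat.card c = Nat.card c.toSimpleGraph.edgeSet + 1 :=
        forall_congr' fun c ↦ by
          rw [SimpleGraph.isTree_iff_connected_and_card, and_iff_right c.connected_toSimpleGraph,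
            eq_comm]
    _ ↔ ∑ c : G.ConnectedComponent, Nat.card c
          = ∑ c : G.ConnectedComponent, (Nat.card c.toSimpleGraph.edgeSet + 1) := by
        rw [Finset.sum_eq_sum_iff_of_le fun c _ ↦
          c.connected_toSimpleGraph.card_vert_le_card_edgeSet_add_one]
        simp only [Finset.mem_univ, true_imp_iff]
    _ ↔ Nat.card G.edgeSet + Nat.card G.ConnectedComponent = Nat.card V := by
        rw [sum_card_connectedComponent, Finset.sum_add_distrib, sum_card_edgeSet_toSimpleGraph,
          Finset.sum_const, Finset.card_univ, smul_eq_mul, mul_one, ← Nat.card_eq_fintype_card,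
          eq_comm]

variable {G} in
theorem card_connectedComponent_of_connected (hG : G.Connected) :
    Nat.card G.ConnectedComponent = 1 := by
  have := hG.nonempty
  have := hG.preconnected.subsingleton_connectedComponent
  exact Nat.card_unique

end Counting

section IslandPoly

variable {V : Type*} [Fintype V] [DecidableEq V] (G : SimpleGraph V)

theorem islandF_of_isAcyclic_induce {S : Finset V} (hS : (G.induce (S : Set V)).IsAcyclic) :
    islandF G S = S.card - Nat.card (G.induce (S : Set V)).edgeSet := by
  have forest_count := (isAcyclic_iff_card_edgeSet_add_card_connectedComponent _).1 hS
  have card_S : Nat.card (S : Set V) = S.card := Nat.card_eq_finsetCard S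
  rw [islandF]
  omega

theorem islandF_of_card_le_two {S : Finset V} (hS : S.card ≤ 2) :
    islandF G S = S.card - Nat.card (G.induce (S : Set V)).edgeSet :=
  islandF_of_isAcyclic_induce G <| .of_card_le_two <| by simpa using mod_cast hS

theorem islandF_singleton (v : V) : islandF G {v} = 1 := by
  rw [islandF_of_card_le_two G (by simp), Finset.coe_singleton,
    Subsingleton.elim (G.induce {v}) ⊥]
  simp

theorem islandF_univ : islandF G Finset.univ
    = 2 * Nat.card G.ConnectedComponent + Nat.card G.edgeSet - Fintype.card V := by
  rw [islandF, Finset.coe_univ,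
    Nat.card_congr (SimpleGraph.induceUnivIso G).connectedComponentEquiv,
    Nat.card_congr (SimpleGraph.induceUnivIso G).mapEdgeSet, Finset.card_univ]

theorem coeff_islandPoly (k : ℕ) :
    (islandPoly G).coeff k = ∑ S ∈ Finset.powersetCard (k + 1) Finset.univ, islandF G S := by
  simp only [islandPoly, finsetSum_coeff, coeff_C_mul, coeff_X_pow, mul_ite, mul_one, mul_zero]
  rw [← Finset.sum_filter]
  refine Finset.sum_congr ?_ fun _ _ ↦ rfl
  ext S
  simp only [Finset.mem_filter, Finset.mem_powerset, Finset.mem_powersetCard, Finset.subset_univ,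
    true_and, ← Finset.card_pos]
  omega

theorem coeff_zero_islandPoly : (islandPoly G).coeff 0 = Fintype.card V := by
  simp [coeff_islandPoly, Finset.powersetCard_one, islandF_singleton]

theorem coeff_one_islandPoly : (islandPoly G).coeff 1
    = (Fintype.card V : ℤ) * (Fintype.card V - 1) - Nat.card G.edgeSet := by
  have islandF_pair : ∀ S ∈ Finset.powersetCard 2 (Finset.univ : Finset V),
      islandF G S = 2 - Nat.card (G.induce (S : Set V)).edgeSet := fun S hS ↦ by
    have card_S := (Finset.mem_powersetCard.1 hS).2
    rw [islandF_of_card_le_two G card_S.le, card_S, Nat.cast_ofNat]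
  have two_mul_choose : ((Fintype.card V).choose 2 : ℤ) * 2
      = Fintype.card V * (Fintype.card V - 1) := by
    qify
    rw [Nat.cast_choose_two]
    ring
  rw [coeff_islandPoly, Finset.sum_congr rfl islandF_pair, Finset.sum_sub_distrib,
    Finset.sum_const, Finset.card_powersetCard, Finset.card_univ, nsmul_eq_mul, two_mul_choose,
    ← Nat.cast_sum, sum_powersetCard_card_edgeSet_induce G le_rfl, Nat.sub_self,
    Nat.choose_zero_right, mul_one]

theorem coeff_card_sub_one_islandPoly [Nonempty V] :
    (islandPoly G).coeff (Fintype.card V - 1)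
      = 2 * Nat.card G.ConnectedComponent + Nat.card G.edgeSet - Fintype.card V := by
  rw [coeff_islandPoly, Nat.sub_add_cancel Fintype.card_pos, ← Finset.card_univ,
    Finset.powersetCard_self, Finset.sum_singleton, islandF_univ, Finset.card_univ]

end IslandPoly

theorem islandPoly_tree_characterization_general {V : Type*} [Fintype V] [DecidableEq V]
    (G : SimpleGraph V) (hn : 2 ≤ Fintype.card V) (a b : ℤ)
    (h : islandPoly G
      = Polynomial.C a * (1 + Polynomial.X) ^ (Fintype.card V - 1)
        + Polynomial.C b * (1 + Polynomial.X) ^ (Fintype.card V - 2)) :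
    a = Nat.card G.ConnectedComponent ∧
      b = (Fintype.card V : ℤ) - Nat.card G.ConnectedComponent ∧ G.IsAcyclic := by
  have : Nonempty V := Fintype.card_pos_iff.1 (by omega)
  obtain ⟨m, hm⟩ : ∃ m, Fintype.card V = m + 2 := Nat.exists_eq_add_of_le' hn
  have coeff_eq (k : ℕ) : (islandPoly G).coeff k = a * (m + 1).choose k + b * m.choose k := by
    rw [h, hm, coeff_add, coeff_C_mul, coeff_C_mul, coeff_one_add_X_pow, coeff_one_add_X_pow]
    rfl
  have constant_coeff : (m + 2 : ℤ) = a + b := by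
    simpa [coeff_zero_islandPoly, hm] using coeff_eq 0
  have linear_coeff : (m + 2 : ℤ) * (m + 1) - Nat.card G.edgeSet = a * (m + 1) + b * m := by
    have := coeff_eq 1
    rw [coeff_one_islandPoly, hm] at this
    push_cast [Nat.choose_one_right] at this
    linarith
  have top_coeff : 2 * (Nat.card G.ConnectedComponent : ℤ) + Nat.card G.edgeSet - (m + 2) = a := by
    have := coeff_eq (Fintype.card V - 1)
    rw [coeff_card_sub_one_islandPoly, hm] at this
    simpa using this
  have ha : a = m + 2 - Nat.card G.edgeSet := by
    linear_combination -linear_coeff + m * constant_coeff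
  refine ⟨by linarith, by rw [hm]; push_cast; linarith, ?_⟩
  rw [isAcyclic_iff_card_edgeSet_add_card_connectedComponent, Nat.card_eq_fintype_card (α := V), hm]
  zify
  linarith

theorem islandPoly_tree_characterization {V : Type*} [Fintype V] [DecidableEq V]
    (G : SimpleGraph V) (hconn : G.Connected) (hn : 3 ≤ Fintype.card V)
    (a b : ℤ)
    (h : islandPoly G
      = Polynomial.C a * (1 + Polynomial.X) ^ (Fintype.card V - 1)
        + Polynomial.C b * (1 + Polynomial.X) ^ (Fintype.card V - 2)) :
    a = 1 ∧ b = (Fintype.card V : ℤ) - 1 ∧ G.IsTree := by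
  simpa only [card_connectedComponent_of_connected hconn, Nat.cast_one, SimpleGraph.isTree_iff,
    hconn, true_and] using islandPoly_tree_characterization_general G (by omega) a b h
end
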